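/- Let u : A → B be a morphism of noetherian rings, M a finitely generated A-module, and N a finitely generated B-module which is flat as an A-module. Consider M ⊗_A N as a B-module. If M is a Cohen-Macaulay A-module and for every P ∈ Supp(M) the fiber module N_P/PN_P is an almost Cohen-Macaulay B_P/PB_P-module, then M ⊗_A N is an almost Cohen-Macaulay B-module. -/

import Mathlib

noncomputable section

open TensorProduct

universe u v w





/-- The depth of the ideal `I` on the module `M`: the supremum of lengths of
`M`-regular sequences with entries in `I`. -/
noncomputable def idealDepth (A : Type u) [CommRing A] (I : Ideal A)
    (M : Type v) [AddCommGroup M] [Module A M] : ℕ∞ :=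
  sSup {n : ℕ∞ | ∃ rs : List A, (rs.length : ℕ∞) = n ∧ (∀ r ∈ rs, r ∈ I) ∧
    RingTheory.Sequence.IsRegular M rs}

/-- The depth of a module over a local ring. -/
noncomputable def localDepth (A : Type u) [CommRing A] [IsLocalRing A]
    (M : Type v) [AddCommGroup M] [Module A M] : ℕ∞ :=
  idealDepth A (IsLocalRing.maximalIdeal A) M

/-- The (Krull) dimension of a module, i.e. the Krull dimension of its support. -/
noncomputable def supportDim (A : Type u) [CommRing A]
    (M : Type v) [AddCommGroup M] [Module A M] : WithBot ℕ∞ :=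
  Order.krullDim (Module.support A M)

/-- `depth (M_P)` : the depth of the localization of `M` at a prime `P`,
over the local ring `A_P`. -/
noncomputable def depthAt (A : Type u) [CommRing A]
    (M : Type v) [AddCommGroup M] [Module A M] (P : PrimeSpectrum A) : ℕ∞ :=
  localDepth (Localization.AtPrime P.asIdeal) (LocalizedModule P.asIdeal.primeCompl M)

/-- `ht_M(P) = dim (M_P)` : the height of a prime `P` in the support of `M`,
i.e. the dimension of the localized module `M_P` over `A_P`. -/
noncomputable def heightAt (A : Type u) [CommRing A]
    (M : Type v) [AddCommGroup M] [Module A M] (P : PrimeSpectrum A) : WithBot ℕ∞ :=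
  supportDim (Localization.AtPrime P.asIdeal) (LocalizedModule P.asIdeal.primeCompl M)

/-- Serre's condition `(S_n)` for a module: for every `P` in the support,
`depth (M_P) ≥ min (n, ht_M(P))`. -/
def SerreCondS (A : Type u) [CommRing A] (n : ℕ)
    (M : Type v) [AddCommGroup M] [Module A M] : Prop :=
  ∀ P ∈ Module.support A M,
    min (n : WithBot ℕ∞) (heightAt A M P) ≤ (depthAt A M P : WithBot ℕ∞)

/-- The condition `(C_n)` for a module: for every `P` in the support,
`depth (M_P) ≥ min (n, ht_M(P)) - 1`, equivalently
`min (n, ht_M(P)) ≤ depth (M_P) + 1`. -/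
def CondC (A : Type u) [CommRing A] (n : ℕ)
    (M : Type v) [AddCommGroup M] [Module A M] : Prop :=
  ∀ P ∈ Module.support A M,
    min (n : WithBot ℕ∞) (heightAt A M P) ≤ (depthAt A M P : WithBot ℕ∞) + 1

/-- A module `M` is almost Cohen-Macaulay if `depth(P, M) = depth (M_P)` for every
`P` in the support of `M` (Kang's definition). -/
def IsAlmostCMModule (A : Type u) [CommRing A]
    (M : Type v) [AddCommGroup M] [Module A M] : Prop :=
  ∀ P ∈ Module.support A M, idealDepth A P.asIdeal M = depthAt A M P

/-- A module `M` is Cohen-Macaulay if `depth (M_P) = dim (M_P)` for every `P` in its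
support. -/
def IsCMModule (A : Type u) [CommRing A]
    (M : Type v) [AddCommGroup M] [Module A M] : Prop :=
  ∀ P ∈ Module.support A M, (depthAt A M P : WithBot ℕ∞) = heightAt A M P

/-- A ring is almost Cohen-Macaulay if it is an almost Cohen-Macaulay module over
itself. -/
abbrev IsAlmostCMRing (A : Type u) [CommRing A] : Prop := IsAlmostCMModule A A

/-- A ring is Cohen-Macaulay if it is a Cohen-Macaulay module over itself, i.e. all its
localizations at primes have depth equal to dimension. -/
abbrev IsCMRing (A : Type u) [CommRing A] : Prop := IsCMModule A A

/-- A ring satisfies `(C_n)` if it does so as a module over itself. -/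
abbrev RingCondC (A : Type u) [CommRing A] (n : ℕ) : Prop := CondC A n A

/-- A ring satisfies `(S_n)` if it does so as a module over itself. -/
abbrev RingSerreCondS (A : Type u) [CommRing A] (n : ℕ) : Prop := SerreCondS A n A






variable (A : Type u) [CommRing A] (B : Type u) [CommRing B] [Algebra A B]

/-- The image in `B` of the complement of a prime `P` of `A`, as a submonoid of `B`. -/
noncomputable def fiberSubmonoid (P : PrimeSpectrum A) : Submonoid B :=
  Submonoid.map (algebraMap A B) P.asIdeal.primeCompl

/-- `PB_P` : the extension of the prime `P` of `A` to the localization `B_P` of `B`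
at (the image of) the complement of `P`. -/
noncomputable def fiberIdeal (P : PrimeSpectrum A) :
    Ideal (Localization (fiberSubmonoid A B P)) :=
  Ideal.map ((algebraMap B (Localization (fiberSubmonoid A B P))).comp (algebraMap A B))
    P.asIdeal

/-- The fiber ring `B_P / P B_P` of `A → B` at a prime `P` of `A`. -/
noncomputable def fiberRing (P : PrimeSpectrum A) : Type u :=
  Localization (fiberSubmonoid A B P) ⧸ fiberIdeal A B P

noncomputable instance (P : PrimeSpectrum A) : CommRing (fiberRing A B P) :=
  inferInstanceAs (CommRing (Localization (fiberSubmonoid A B P) ⧸ fiberIdeal A B P))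

/-- The fiber module `N_P / P N_P` of a `B`-module `N` at a prime `P` of `A`. -/
noncomputable def fiberModule (P : PrimeSpectrum A)
    (N : Type u) [AddCommGroup N] [Module B N] : Type u :=
  LocalizedModule (fiberSubmonoid A B P) N ⧸
    (fiberIdeal A B P •
      (⊤ : Submodule (Localization (fiberSubmonoid A B P))
        (LocalizedModule (fiberSubmonoid A B P) N)))

noncomputable instance (P : PrimeSpectrum A) (N : Type u) [AddCommGroup N] [Module B N] :
    AddCommGroup (fiberModule A B P N) :=
  inferInstanceAs (AddCommGroup (LocalizedModule (fiberSubmonoid A B P) N ⧸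
    (fiberIdeal A B P •
      (⊤ : Submodule (Localization (fiberSubmonoid A B P))
        (LocalizedModule (fiberSubmonoid A B P) N)))))

/-- `N_P / P N_P` is a module over the fiber ring `B_P / P B_P`. -/
noncomputable instance (P : PrimeSpectrum A) (N : Type u) [AddCommGroup N] [Module B N] :
    Module (fiberRing A B P) (fiberModule A B P N) :=
  inferInstanceAs (Module (Localization (fiberSubmonoid A B P) ⧸ fiberIdeal A B P)
    (LocalizedModule (fiberSubmonoid A B P) N ⧸
      (fiberIdeal A B P •
        (⊤ : Submodule (Localization (fiberSubmonoid A B P))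
          (LocalizedModule (fiberSubmonoid A B P) N)))))








/-- The canonical `B`-module structure on `M ⊗[A] N`, where `N` is a `B`-module,
given by `b • (m ⊗ n) = m ⊗ (b • n)`. -/
noncomputable instance tensorRightModule (A : Type u) [CommRing A] (B : Type u) [CommRing B]
    [Algebra A B] (M : Type u) [AddCommGroup M] [Module A M]
    (N : Type u) [AddCommGroup N] [Module A N] [Module B N] [IsScalarTower A B N] :
    Module B (M ⊗[A] N) where
  smul b x := (TensorProduct.comm A M N).symm (b • TensorProduct.comm A M N x)
  one_smul x := by
    show (TensorProduct.comm A M N).symm ((1 : B) • TensorProduct.comm A M N x) = x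
    simp
  mul_smul a b x := by
    show (TensorProduct.comm A M N).symm ((a * b) • TensorProduct.comm A M N x) =
      (TensorProduct.comm A M N).symm (a • TensorProduct.comm A M N
        ((TensorProduct.comm A M N).symm (b • TensorProduct.comm A M N x)))
    simp [mul_smul]
  smul_zero b := by
    show (TensorProduct.comm A M N).symm (b • TensorProduct.comm A M N 0) = 0
    simp
  smul_add b x y := by
    show (TensorProduct.comm A M N).symm (b • TensorProduct.comm A M N (x + y)) =
      (TensorProduct.comm A M N).symm (b • TensorProduct.comm A M N x) +
      (TensorProduct.comm A M N).symm (b • TensorProduct.comm A M N y)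
    simp
  add_smul a b x := by
    show (TensorProduct.comm A M N).symm ((a + b) • TensorProduct.comm A M N x) =
      (TensorProduct.comm A M N).symm (a • TensorProduct.comm A M N x) +
      (TensorProduct.comm A M N).symm (b • TensorProduct.comm A M N x)
    simp [add_smul]
  zero_smul x := by
    show (TensorProduct.comm A M N).symm ((0 : B) • TensorProduct.comm A M N x) = 0
    simp

section Lemmas

open RingTheory.Sequence IsLocalRing CategoryTheory Pointwise

section Depth

variable {R : Type u} [CommRing R] {M : Type v} [AddCommGroup M] [Module R M]

lemma length_le_idealDepth {I : Ideal R} {rs : List R} (hI : ∀ r ∈ rs, r ∈ I)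
    (hrs : IsRegular M rs) : (rs.length : ℕ∞) ≤ idealDepth R I M :=
  le_sSup ⟨rs, rfl, hI, hrs⟩

lemma idealDepth_mono {I J : Ideal R} (h : I ≤ J) : idealDepth R I M ≤ idealDepth R J M :=
  sSup_le_sSup fun _ ⟨rs, hn, hI, hrs⟩ => ⟨rs, hn, fun r hr => h (hI r hr), hrs⟩

lemma RingTheory.Sequence.IsRegular.take {rs : List R} (hrs : IsRegular M rs) (n : ℕ) :
    IsRegular M (rs.take n) := by
  have h := hrs.toIsWeaklyRegular
  rw [← rs.take_append_drop n, isWeaklyRegular_append_iff] at h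
  refine ⟨h.1, fun h' => hrs.top_ne_smul (top_le_iff.mp ?_).symm⟩
  exact h'.le.trans (Submodule.smul_mono_left (Ideal.span_mono fun r hr => List.mem_of_mem_take hr))

lemma exists_isRegular_of_le_idealDepth [Nontrivial M] {I : Ideal R} {n : ℕ}
    (h : (n : ℕ∞) ≤ idealDepth R I M) :
    ∃ rs : List R, rs.length = n ∧ (∀ r ∈ rs, r ∈ I) ∧ IsRegular M rs := by
  rcases n with _ | n
  · exact ⟨[], rfl, by simp, .nil R M⟩
  · have h' : (n : ℕ∞) < idealDepth R I M := lt_of_lt_of_le (by exact_mod_cast n.lt_succ_self) h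
    obtain ⟨_, ⟨rs, rfl, hI, hrs⟩, hlt⟩ := lt_sSup_iff.mp h'
    have hlt : n < rs.length := by exact_mod_cast hlt
    exact ⟨rs.take (n + 1), by simp; omega, fun r hr => hI r (List.mem_of_mem_take hr),
      hrs.take _⟩

end Depth

section LocalDepth

lemma maximalIdeal_smul_top_lt_top {R : Type u} [CommRing R] [IsLocalRing R]
    (M : Type v) [AddCommGroup M] [Module R M] [Module.Finite R M] [Nontrivial M] : maximalIdeal R • (⊤ : Submodule R M) < ⊤ :=
  lt_top_iff_ne_top.mpr (Submodule.top_ne_ideal_smul_of_le_jacobson_annihilator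
    (maximalIdeal_le_jacobson _)).symm

variable {R : Type u} [CommRing R] [IsLocalRing R] [IsNoetherianRing R]

lemma localDepth_le_supportDim (M : Type v) [AddCommGroup M] [Module R M] [Module.Finite R M]
    [Nontrivial M] : (localDepth R M : WithBot ℕ∞) ≤ supportDim R M := by
  obtain ⟨d, hd⟩ := WithBot.ne_bot_iff_exists.mp (Module.supportDim_ne_bot_of_nontrivial R M)
  change _ ≤ Module.supportDim R M
  rw [← hd, WithBot.coe_le_coe]
  refine sSup_le ?_
  rintro _ ⟨rs, rfl, -, hrs⟩
  have h := Module.supportDim_add_length_eq_supportDim_of_isRegular rs hrs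
  have := hrs.quot_ofList_smul_nontrivial ⊤
  obtain ⟨e, he⟩ := WithBot.ne_bot_iff_exists.mp
    (Module.supportDim_ne_bot_of_nontrivial R (M ⧸ Ideal.ofList rs • (⊤ : Submodule R M)))
  rw [← hd, ← he] at h
  have h : e + rs.length = d := by exact_mod_cast h
  exact h ▸ le_add_self

lemma localDepth_ne_top (M : Type v) [AddCommGroup M] [Module R M] [Module.Finite R M]
    [Nontrivial M] : localDepth R M ≠ ⊤ := by
  intro h
  have h1 := localDepth_le_supportDim (R := R) M
  rw [h] at h1
  have h2 : supportDim R M ≤ ringKrullDim R := Module.supportDim_le_ringKrullDim R M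
  exact (h1.trans h2).not_gt ringKrullDim_lt_top

variable {M : Type u} [AddCommGroup M] [Module R M] [Module.Finite R M] [Nontrivial M]

lemma le_localDepth_quotSMulTop {x : R} (hx : x ∈ maximalIdeal R) (hreg : IsSMulRegular M x)
    {n : ℕ} (h : ((n + 1 : ℕ) : ℕ∞) ≤ localDepth R M) :
    (n : ℕ∞) ≤ localDepth R (QuotSMulTop x M) := by
  have : Nontrivial (QuotSMulTop x M) := nontrivial_quotSMulTop_of_mem_maximalIdeal _ hx
  have h2 := ((ModuleCat.exists_isRegular_tfae (maximalIdeal R) (n + 1) (ModuleCat.of R M)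
    (maximalIdeal_smul_top_lt_top M)).out 3 1).mp (exists_isRegular_of_le_idealDepth h)
  obtain ⟨rs, rfl, hmem, hrs⟩ := ((ModuleCat.exists_isRegular_tfae (maximalIdeal R) n
    (ModuleCat.of R (QuotSMulTop x M)) (maximalIdeal_smul_top_lt_top (QuotSMulTop x M))).out
      1 3).mp fun i hi => by
    have zero1 := AddCommGrpCat.isZero_of_iff_subsingleton.mpr (h2 i (by omega))
    have zero2 := AddCommGrpCat.isZero_of_iff_subsingleton.mpr (h2 (i + 1) (by omega))
    exact AddCommGrpCat.subsingleton_of_isZero <| ShortComplex.Exact.isZero_of_both_zeros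
      ((Abelian.Ext.covariant_sequence_exact₃' _
        (IsSMulRegular.smulShortComplex_shortExact (M := ModuleCat.of R M) hreg)) i (i + 1) rfl)
      (zero1.eq_zero_of_src _) (zero2.eq_zero_of_tgt _)
  exact length_le_idealDepth hmem hrs

/-- All maximal regular sequences have the same length: a regular sequence shorter than the depth
can be extended. -/
lemma exists_isSMulRegular_quotient_of_length_lt_localDepth {rs : List R}
    (hrs : IsWeaklyRegular M rs) (hmem : ∀ r ∈ rs, r ∈ maximalIdeal R)
    (h : (rs.length : ℕ∞) < localDepth R M) :
    ∃ y ∈ maximalIdeal R, IsSMulRegular (M ⧸ (Ideal.ofList rs • ⊤ : Submodule R M)) y := by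
  induction rs generalizing M with
  | nil =>
    obtain ⟨ys, hlen, hmem, hys⟩ := exists_isRegular_of_le_idealDepth (n := 1)
      (Order.add_one_le_of_lt h)
    obtain ⟨y, rfl⟩ := List.length_eq_one_iff.mp hlen
    refine ⟨y, hmem y (by simp), ?_⟩
    have e := Submodule.quotEquivOfEqBot (Ideal.ofList ([] : List R) • ⊤ : Submodule R M) (by simp)
    exact (e.isSMulRegular_congr y).mpr ((isWeaklyRegular_singleton_iff M y).mp hys.1)
  | cons x rs ih =>
    rw [isWeaklyRegular_cons_iff] at hrs
    have hx := hmem x (by simp)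
    have : Nontrivial (QuotSMulTop x M) := nontrivial_quotSMulTop_of_mem_maximalIdeal _ hx
    obtain ⟨y, hy, hreg⟩ := ih hrs.2 (fun r hr => hmem r (by simp [hr]))
      (lt_of_lt_of_le (by exact_mod_cast rs.length.lt_succ_self)
        (le_localDepth_quotSMulTop hx hrs.1 (n := rs.length + 1)
          (by simpa using Order.add_one_le_of_lt h)))
    exact ⟨y, hy, ((Submodule.quotOfListConsSMulTopEquivQuotSMulTopInner M x rs).isSMulRegular_congr y).mpr
      hreg⟩

lemma length_add_one_le_idealDepth {R : Type u} [CommRing R] {M : Type v} [AddCommGroup M]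
    [Module R M] {I : Ideal R} (hI : I • (⊤ : Submodule R M) ≠ ⊤) {rs : List R}
    (hrs : IsWeaklyRegular M rs) (hmem : ∀ r ∈ rs, r ∈ I) {y : R} (hy : y ∈ I)
    (hreg : IsSMulRegular (M ⧸ (Ideal.ofList rs • ⊤ : Submodule R M)) y) :
    (rs.length + 1 : ℕ∞) ≤ idealDepth R I M := by
  have hmem' : ∀ r ∈ rs ++ [y], r ∈ I := by simpa [or_imp, forall_and] using ⟨hmem, hy⟩
  have h : IsRegular M (rs ++ [y]) := by
    refine ⟨(isWeaklyRegular_append_iff M rs [y]).mpr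
      ⟨hrs, (isWeaklyRegular_singleton_iff _ y).mpr hreg⟩, fun h => hI (top_le_iff.mp ?_)⟩
    exact h.le.trans (Submodule.smul_mono_left (Ideal.span_le.mpr hmem'))
  simpa using length_le_idealDepth hmem' h

end LocalDepth

section Localization

variable {R : Type u} [CommRing R] {M : Type v} [AddCommGroup M] [Module R M]

lemma mem_support_localizedModule_iff (S : Submonoid R) (q : PrimeSpectrum (Localization S)) :
    q ∈ Module.support (Localization S) (LocalizedModule S M) ↔
      q.comap (algebraMap R (Localization S)) ∈ Module.support R M := by
  rw [Module.mem_support_iff', Module.mem_support_iff']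
  constructor
  · rintro ⟨m', hm⟩
    induction m' using LocalizedModule.induction_on with | _ m s
    refine ⟨m, fun r hr h => hm (algebraMap R _ r) hr ?_⟩
    rw [algebraMap_smul, LocalizedModule.smul'_mk, h, LocalizedModule.zero_mk]
  · rintro ⟨m, hm⟩
    refine ⟨LocalizedModule.mk m 1, fun r' hr' h => ?_⟩
    obtain ⟨r, s, rfl⟩ := IsLocalization.exists_mk'_eq S r'
    rw [← Localization.mk_eq_mk', LocalizedModule.mk_smul_mk, ← LocalizedModule.zero_mk 1,
      LocalizedModule.mk_eq] at h
    obtain ⟨t, ht⟩ := h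
    rw [one_smul, smul_zero, smul_zero] at ht
    refine hm (t * r) ?_ (by rw [mul_smul]; exact ht)
    change algebraMap R (Localization S) (t * r) ∉ q.asIdeal
    intro hmem
    rw [map_mul] at hmem
    rcases q.2.mem_or_mem hmem with h | h
    · exact q.2.ne_top (Ideal.eq_top_of_isUnit_mem _ h (IsLocalization.map_units _ t))
    · exact hr' ((IsLocalization.mk'_mem_iff).mpr h)

lemma heightAt_eq_height (p : PrimeSpectrum R) (hp : p ∈ Module.support R M) :
    heightAt R M p = (Order.height (⟨p, hp⟩ : Module.support R M) : WithBot ℕ∞) := by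
  rw [Order.height_eq_krullDim_Iic]
  let e := IsLocalization.AtPrime.primeSpectrumOrderIso (Localization.AtPrime p.asIdeal) p.asIdeal
  refine Order.krullDim_eq_of_orderIso
    { toFun := fun q => ⟨⟨(e q.1).1, (mem_support_localizedModule_iff _ _).mp q.2⟩, (e q.1).2⟩
      invFun := fun q => ⟨e.symm ⟨q.1.1, q.2⟩, (mem_support_localizedModule_iff _ _).mpr (by
        have h : (e.symm ⟨q.1.1, q.2⟩).comap (algebraMap R _) = q.1.1 :=
          congrArg Subtype.val (e.apply_symm_apply ⟨q.1.1, q.2⟩)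
        rw [h]
        exact q.1.2)⟩
      left_inv := fun q => Subtype.ext (e.symm_apply_apply q.1)
      right_inv := fun q => Subtype.ext (Subtype.ext
        (congrArg Subtype.val (e.apply_symm_apply ⟨q.1.1, q.2⟩) : _))
      map_rel_iff' := fun {a b} => e.map_rel_iff (a := a.1) (b := b.1) }

end Localization

section AssociatedPrimes

variable {R : Type u} [CommRing R] [IsNoetherianRing R] {M : Type u} [AddCommGroup M] [Module R M]

lemma exists_mem_associatedPrimes_le [Module.Finite R M] {I : Ideal R} (h : ∀ y ∈ I, ¬ IsSMulRegular M y) :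
    ∃ p ∈ associatedPrimes R M, I ≤ p := by
  refine (I.subset_union_prime_finite (associatedPrimes.finite R M) (f := id) 0 0
    fun _ h _ _ ↦ h.1).1 ?_
  have := biUnion_associatedPrimes_eq_compl_regular R M
  exact fun y hy => this.symm ▸ h y hy

lemma maximalIdeal_mem_associatedPrimes_iff (q : PrimeSpectrum R) (rs : List R) :
    maximalIdeal (Localization.AtPrime q.asIdeal) ∈
      associatedPrimes (Localization.AtPrime q.asIdeal)
        (LocalizedModule q.asIdeal.primeCompl M ⧸ (Ideal.ofList (rs.map (algebraMap R (Localization.AtPrime q.asIdeal))) • ⊤ :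
          Submodule (Localization.AtPrime q.asIdeal) (LocalizedModule q.asIdeal.primeCompl M))) ↔
      q.asIdeal ∈ associatedPrimes R (M ⧸ (Ideal.ofList rs • ⊤ : Submodule R M)) := by
  have h := Module.associatedPrimes.preimage_comap_associatedPrimes_eq_associatedPrimes_of_isLocalizedModule
    q.asIdeal.primeCompl (Localization.AtPrime q.asIdeal)
    ((Ideal.ofList rs • ⊤ : Submodule R M).toLocalizedQuotient q.asIdeal.primeCompl)
  have e : (Ideal.ofList rs • ⊤ : Submodule R M).localized q.asIdeal.primeCompl =
      (Ideal.ofList (rs.map (algebraMap R (Localization.AtPrime q.asIdeal))) • ⊤ :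
          Submodule (Localization.AtPrime q.asIdeal) (LocalizedModule q.asIdeal.primeCompl M)) := by
    rw [Submodule.localized, Submodule.localized'_smul, Ideal.localized'_eq_map,
      Submodule.localized'_top, Ideal.map_ofList]
  rw [← e, ← h, Set.mem_preimage, ← Ideal.under_def, Localization.AtPrime.under_maximalIdeal]

end AssociatedPrimes

section DepthAt

variable {R : Type u} [CommRing R] {M : Type u} [AddCommGroup M] [Module R M] {p q : PrimeSpectrum R}

lemma heightAt_add_one_le (hq : q ∈ Module.support R M) (h : q < p) :
    heightAt R M q + 1 ≤ heightAt R M p := by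
  rw [heightAt_eq_height q hq, heightAt_eq_height p (Module.mem_support_mono h.le hq)]
  have := Order.height_add_one_le (a := (⟨q, hq⟩ : Module.support R M))
    (b := ⟨p, Module.mem_support_mono h.le hq⟩) h
  exact_mod_cast this

variable [Module.Finite R M]

lemma smul_top_ne_top_of_mem_support {I : Ideal R} (hq : q ∈ Module.support R M)
    (hI : I ≤ q.asIdeal) : I • (⊤ : Submodule R M) ≠ ⊤ := by
  intro h
  have hmem : q ∈ Module.support R (M ⧸ (I • ⊤ : Submodule R M)) := by
    rw [Module.support_quotient]
    exact ⟨hq, hI⟩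
  have : Subsingleton (M ⧸ (I • ⊤ : Submodule R M)) := Submodule.Quotient.subsingleton_iff.mpr h
  simp [Module.support_eq_empty] at hmem

lemma map_algebraMap_mem_maximalIdeal {rs : List R} (hmem : ∀ r ∈ rs, r ∈ q.asIdeal) :
    ∀ r ∈ rs.map (algebraMap R (Localization.AtPrime q.asIdeal)),
      r ∈ maximalIdeal (Localization.AtPrime q.asIdeal) := by
  intro r hr
  obtain ⟨x, hx, rfl⟩ := List.mem_map.mp hr
  exact (IsLocalization.AtPrime.to_map_mem_maximal_iff _ q.asIdeal x).mpr (hmem x hx)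

lemma isRegular_localizedModule {rs : List R} (hq : q ∈ Module.support R M)
    (hrs : IsWeaklyRegular M rs) (hmem : ∀ r ∈ rs, r ∈ q.asIdeal) :
    IsRegular (LocalizedModule q.asIdeal.primeCompl M)
      (rs.map (algebraMap R (Localization.AtPrime q.asIdeal))) :=
  have := Module.mem_support_iff.mp hq
  hrs.isRegular_of_isLocalizedModule_of_mem (Localization.AtPrime q.asIdeal) q.asIdeal
    (LocalizedModule.mkLinearMap q.asIdeal.primeCompl M) hmem

lemma idealDepth_le_depthAt (hq : q ∈ Module.support R M) :
    idealDepth R q.asIdeal M ≤ depthAt R M q := by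
  refine sSup_le ?_
  rintro _ ⟨rs, rfl, hmem, hrs⟩
  simpa [depthAt, localDepth] using length_le_idealDepth (map_algebraMap_mem_maximalIdeal hmem)
    (isRegular_localizedModule hq hrs.1 hmem)

variable [IsNoetherianRing R]

lemma depthAt_le_heightAt (hq : q ∈ Module.support R M) :
    (depthAt R M q : WithBot ℕ∞) ≤ heightAt R M q :=
  have := Module.mem_support_iff.mp hq
  localDepth_le_supportDim _

lemma depthAt_ne_top (hq : q ∈ Module.support R M) : depthAt R M q ≠ ⊤ :=
  have := Module.mem_support_iff.mp hq
  localDepth_ne_top _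

/-- For a regular sequence `rs` in `q`, the prime `q` is associated to `M / rs M` if and only if
`depth M_q ≤ length rs`. -/
lemma mem_associatedPrimes_iff_depthAt_le {rs : List R} (hq : q ∈ Module.support R M)
    (hrs : IsWeaklyRegular M rs) (hmem : ∀ r ∈ rs, r ∈ q.asIdeal) :
    q.asIdeal ∈ associatedPrimes R (M ⧸ (Ideal.ofList rs • ⊤ : Submodule R M)) ↔
      depthAt R M q ≤ rs.length := by
  have := Module.mem_support_iff.mp hq
  rw [← maximalIdeal_mem_associatedPrimes_iff]
  have hmem' := map_algebraMap_mem_maximalIdeal hmem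
  have hrs' := isRegular_localizedModule hq hrs hmem
  constructor
  · intro h
    by_contra! hlt
    obtain ⟨y, hy, hreg⟩ := exists_isSMulRegular_quotient_of_length_lt_localDepth hrs'.1 hmem'
      (by simpa [depthAt] using hlt)
    have := biUnion_associatedPrimes_eq_compl_regular (Localization.AtPrime q.asIdeal)
      (LocalizedModule q.asIdeal.primeCompl M ⧸
        (Ideal.ofList (rs.map (algebraMap R (Localization.AtPrime q.asIdeal))) • ⊤ :
          Submodule (Localization.AtPrime q.asIdeal) (LocalizedModule q.asIdeal.primeCompl M)))
    exact this.subset (Set.mem_biUnion h hy) hreg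
  · intro hle
    by_contra hnot
    have key : ∃ y ∈ maximalIdeal (Localization.AtPrime q.asIdeal), IsSMulRegular
        (LocalizedModule q.asIdeal.primeCompl M ⧸
          (Ideal.ofList (rs.map (algebraMap R (Localization.AtPrime q.asIdeal))) • ⊤ :
          Submodule (Localization.AtPrime q.asIdeal) (LocalizedModule q.asIdeal.primeCompl M))) y := by
      by_contra! hy
      obtain ⟨p, hp, hle⟩ := exists_mem_associatedPrimes_le hy
      rw [← (maximalIdeal.isMaximal _).eq_of_le (IsAssociatedPrime.isPrime hp).ne_top hle] at hp
      exact hnot hp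
    obtain ⟨y, hy, hreg⟩ := key
    have h := length_add_one_le_idealDepth (maximalIdeal_smul_top_lt_top _).ne hrs'.1 hmem' hy hreg
    rw [List.length_map] at h
    have := h.trans hle
    norm_cast at this
    omega

lemma exists_isRegular_length_eq_idealDepth (hq : q ∈ Module.support R M) :
    ∃ rs : List R, (rs.length : ℕ∞) = idealDepth R q.asIdeal M ∧ (∀ r ∈ rs, r ∈ q.asIdeal) ∧
      IsRegular M rs := by
  have : Nontrivial M := Module.nonempty_support_iff.mp ⟨q, hq⟩
  obtain ⟨n, hn⟩ := ENat.ne_top_iff_exists.mp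
    (ne_top_of_le_ne_top (depthAt_ne_top hq) (idealDepth_le_depthAt hq))
  obtain ⟨rs, rfl, h⟩ := exists_isRegular_of_le_idealDepth hn.le
  exact ⟨rs, hn, h⟩

lemma isAlmostCMModule_of_heightAt_le
    (h : ∀ q ∈ Module.support R M, heightAt R M q ≤ depthAt R M q + 1) :
    IsAlmostCMModule R M := by
  intro q hq
  refine le_antisymm (idealDepth_le_depthAt hq) ?_
  obtain ⟨rs, hlen, hmem, hrs⟩ := exists_isRegular_length_eq_idealDepth hq
  have hnot : ∀ y ∈ q.asIdeal, ¬ IsSMulRegular (M ⧸ (Ideal.ofList rs • ⊤ : Submodule R M)) y := by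
    intro y hy hreg
    have := length_add_one_le_idealDepth (smul_top_ne_top_of_mem_support hq le_rfl) hrs.1 hmem hy hreg
    rw [← hlen] at this
    norm_cast at this
    omega
  obtain ⟨I, hI, hle⟩ := exists_mem_associatedPrimes_le hnot
  let p : PrimeSpectrum R := ⟨I, IsAssociatedPrime.isPrime hI⟩
  have hqp : q ≤ p := hle
  have hp : p ∈ Module.support R M := Module.mem_support_mono hqp hq
  have hdp : depthAt R M p ≤ rs.length :=
    (mem_associatedPrimes_iff_depthAt_le hp hrs.1 fun r hr => hle (hmem r hr)).mp hI
  rw [← hlen]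
  rcases hqp.eq_or_lt with h' | h'
  · rwa [h']
  · have h1 := (depthAt_le_heightAt hq)
    have h2 := (heightAt_add_one_le hq h').trans (h p hp)
    have h3 := (add_le_add_left h1 1).trans h2
    have h4 : depthAt R M q + 1 ≤ depthAt R M p + 1 := by exact_mod_cast h3
    exact ((ENat.add_le_add_iff_right ENat.one_ne_top).mp h4).trans hdp

end DepthAt

section AlmostCohenMacaulay

variable {R : Type u} [CommRing R] [IsNoetherianRing R]

/-- In a noetherian ring, there are infinitely many primes strictly between the ends of a chain of
length two. -/
lemma PrimeSpectrum.infinite_Ioo {p q r : PrimeSpectrum R} (hpq : p < q) (hqr : q < r) :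
    (Set.Ioo p r).Infinite := by
  intro hfin
  obtain ⟨y, hyr, hy⟩ : ∃ y ∈ r.asIdeal, ∀ s ∈ Set.Ico p r, y ∉ s.asIdeal := by
    by_contra! h
    have hfin' : (Set.Ico p r).Finite := by
      rw [← Set.Ioo_insert_left (hpq.trans hqr)]
      exact hfin.insert p
    obtain ⟨s, hs, hle⟩ := (r.asIdeal.subset_union_prime_finite hfin' (f := PrimeSpectrum.asIdeal)
      p p fun s _ _ _ => s.2).1 fun y hy => by
        obtain ⟨s, hs, hys⟩ := h y hy
        exact Set.mem_biUnion hs hys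
    exact hs.2.not_ge hle
  have hle : Ideal.span (insert y (p.asIdeal : Set R)) ≤ r.asIdeal :=
    Ideal.span_le.mpr (Set.insert_subset hyr (hpq.trans hqr).le)
  obtain ⟨s, hs, hsr⟩ := Ideal.exists_minimalPrimes_le hle
  have hys : insert y (p.asIdeal : Set R) ⊆ s := Ideal.span_le.mp hs.1.2
  have hsr : s = r.asIdeal := by
    by_contra hne
    exact hy ⟨s, hs.1.1⟩ ⟨fun x hx => hys (Or.inr hx), lt_of_le_of_ne hsr
      fun h => hne (congrArg PrimeSpectrum.asIdeal h)⟩ (hys (Or.inl rfl))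
  rw [hsr] at hs
  have := Ideal.mem_minimalPrimes_span_of_mem_minimalPrimes_span_insert (q := q.asIdeal)
    hqr y p.asIdeal hs p.asIdeal hpq.le
    fun x hx => Ideal.le_radical (Ideal.subset_span (Or.inr hx))
  rw [Ideal.span_eq] at this
  exact hpq.not_ge (this.2 ⟨p.2, le_rfl⟩ hpq.le)

variable {M : Type u} [AddCommGroup M] [Module R M] {p : PrimeSpectrum R}

lemma heightAt_le_one_of_finite (hp : p ∈ Module.support R M)
    (h : (Module.support R M ∩ Set.Iic p).Finite) : heightAt R M p ≤ 1 := by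
  rw [heightAt_eq_height p hp]
  by_contra! hlt
  have hlt : (1 : ℕ∞) < Order.height (⟨p, hp⟩ : Module.support R M) := by exact_mod_cast hlt
  obtain ⟨c, hlast, hlen⟩ := Order.exists_series_of_le_height _ (n := 2)
    (Order.add_one_le_of_lt hlt)
  have h01 : c ⟨0, by omega⟩ < c ⟨1, by omega⟩ := c.strictMono (by simp [Fin.lt_def])
  have h12 : c ⟨1, by omega⟩ < c (Fin.last _) := c.strictMono (by simp [Fin.lt_def, hlen])
  refine PrimeSpectrum.infinite_Ioo h01 h12 (h.subset fun q hq => ⟨?_, ?_⟩)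
  · exact Module.mem_support_mono hq.1.le (c _).2
  · have : c (Fin.last _) = ⟨p, hp⟩ := hlast
    rw [this] at hq
    exact hq.2.le

variable [Module.Finite R M]

lemma heightAt_eq_heightAt_quotient_add_length {rs : List R} (hp : p ∈ Module.support R M)
    (hrs : IsWeaklyRegular M rs) (hmem : ∀ r ∈ rs, r ∈ p.asIdeal) :
    heightAt R M p = heightAt R (M ⧸ (Ideal.ofList rs • ⊤ : Submodule R M)) p + rs.length := by
  have := Module.mem_support_iff.mp hp
  have h := Module.supportDim_add_length_eq_supportDim_of_isRegular _
    (isRegular_localizedModule hp hrs hmem)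
  rw [List.length_map] at h
  refine h.symm.trans (congrArg (· + _) (congrArg (fun s : Set _ => Order.krullDim s) ?_))
  ext q
  rw [mem_support_localizedModule_iff, Module.support_quotient, Module.support_quotient,
    ← Ideal.map_ofList, Set.mem_inter_iff, Set.mem_inter_iff, mem_support_localizedModule_iff]
  refine and_congr Iff.rfl ?_
  exact Ideal.map_le_iff_le_comap

lemma IsAlmostCMModule.heightAt_le (h : IsAlmostCMModule R M) (hp : p ∈ Module.support R M) :
    heightAt R M p ≤ depthAt R M p + 1 := by
  obtain ⟨rs, hlen, hmem, hrs⟩ := exists_isRegular_length_eq_idealDepth hp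
  have hsupp := Module.support_quotient (M := M) (Ideal.ofList rs)
  rw [heightAt_eq_heightAt_quotient_add_length hp hrs.1 hmem, ← h p hp, ← hlen, add_comm]
  refine add_le_add_right (heightAt_le_one_of_finite ?_ ?_) _
  · rw [hsupp]
    exact ⟨hp, Ideal.span_le.mpr hmem⟩
  · refine Set.Finite.of_finite_image (f := PrimeSpectrum.asIdeal)
      ((associatedPrimes.finite R (M ⧸ (Ideal.ofList rs • ⊤ : Submodule R M))).subset ?_)
      fun _ _ _ _ => PrimeSpectrum.ext
    rintro _ ⟨q, ⟨hq, hqp⟩, rfl⟩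
    rw [hsupp] at hq
    have hmemq : ∀ r ∈ rs, r ∈ q.asIdeal := fun r hr => hq.2 (Ideal.subset_span hr)
    rw [mem_associatedPrimes_iff_depthAt_le hq.1 hrs.1 hmemq, ← h q hq.1, hlen]
    exact idealDepth_mono hqp

end AlmostCohenMacaulay

section ShortExact

variable {R : Type u} [CommRing R]

lemma RingTheory.Sequence.IsWeaklyRegular.of_exact {ys : List R}
    {X₁ X₂ X₃ : Type u} [AddCommGroup X₁] [AddCommGroup X₂] [AddCommGroup X₃]
    [Module R X₁] [Module R X₂] [Module R X₃] {f : X₁ →ₗ[R] X₂} {g : X₂ →ₗ[R] X₃}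
    (hf : Function.Injective f) (hfg : Function.Exact f g) (hg : Function.Surjective g)
    (h₁ : IsWeaklyRegular X₁ ys) (h₃ : IsWeaklyRegular X₃ ys) : IsWeaklyRegular X₂ ys := by
  induction ys generalizing X₁ X₂ X₃ with
  | nil => exact .nil R X₂
  | cons y ys ih =>
    rw [isWeaklyRegular_cons_iff] at h₁ h₃ ⊢
    refine ⟨isSMulRegular_of_range_eq_ker hf hfg.linearMap_ker_eq.symm h₁.1 h₃.1, ?_⟩
    refine ih (f := QuotSMulTop.map y f) (g := QuotSMulTop.map y g) ?_
      (QuotSMulTop.map_exact y hfg hg) (QuotSMulTop.map_surjective y hg) h₁.2 h₃.2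
    have hzero : Function.Exact (0 : PUnit.{u + 1} →ₗ[R] X₁) f :=
      (LinearMap.exact_zero_iff_injective _ _).mpr hf
    have := QuotSMulTop.map_first_exact_on_four_term_exact_of_isSMulRegular_last hzero hfg h₃.1
    rw [map_zero] at this
    exact (LinearMap.exact_zero_iff_injective _ _).mp this

end ShortExact

/-- Mathlib's module structure through the left factor of a tensor product, restated so that it can
be given precedence over `tensorRightModule`. -/
abbrev tensorLeftModule {R R' M N : Type*} [CommSemiring R] [Semiring R'] [AddCommMonoid M]
    [AddCommMonoid N] [Module R M] [Module R N] [Module R' M] [SMulCommClass R R' M] :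
    Module R' (M ⊗[R] N) :=
  TensorProduct.leftModule

/-- The module structure of a tensor product over its base ring, restated so that it can be given
precedence over `tensorRightModule`. -/
abbrev tensorModule {R M N : Type*} [CommSemiring R] [AddCommMonoid M]
    [AddCommMonoid N] [Module R M] [Module R N] : Module R (M ⊗[R] N) :=
  TensorProduct.instModule

section LocalFlat

attribute [local instance] tensorLeftModule tensorModule

variable {A B : Type u} [CommRing A] [CommRing B] [Algebra A B]
  {N : Type u} [AddCommGroup N] [Module A N] [Module B N] [IsScalarTower A B N]

lemma Module.Finite.tensorProduct_left (M : Type u) [AddCommGroup M] [Module A M]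
    [Module.Finite A M] [Module.Finite B N] : Module.Finite B (N ⊗[A] M) :=
  .equiv (AlgebraTensorModule.cancelBaseChange A B B N M)

lemma ker_lTensor_mkQ_smul_top (M : Type u) [AddCommGroup M] [Module A M] (I : Ideal A) :
    LinearMap.ker (AlgebraTensorModule.lTensor B N (I • ⊤ : Submodule A M).mkQ) =
      I.map (algebraMap A B) • ⊤ := by
  apply le_antisymm
  · intro x hx
    have hx' : x ∈ LinearMap.ker (LinearMap.lTensor N (I • ⊤ : Submodule A M).mkQ) := hx
    rw [LinearMap.exact_iff.mp (lTensor_exact N (LinearMap.exact_subtype_mkQ (I • ⊤))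
      (Submodule.mkQ_surjective _))] at hx'
    obtain ⟨z, rfl⟩ := hx'
    clear hx
    induction z with
    | zero => simp
    | add z w hz hw =>
      rw [map_add]
      exact add_mem hz hw
    | tmul n m =>
      obtain ⟨m, hm⟩ := m
      simp only [LinearMap.lTensor_tmul, Submodule.subtype_apply]
      induction hm using Submodule.smul_induction_on' with
      | smul a ha m _ =>
        rw [TensorProduct.tmul_smul, ← algebraMap_smul B a (n ⊗ₜ[A] m)]
        exact Submodule.smul_mem_smul (Ideal.mem_map_of_mem _ ha) Submodule.mem_top
      | add m _ m' _ h h' => rw [TensorProduct.tmul_add]; exact add_mem h h'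
  · rw [Submodule.smul_le]
    intro b hb x _
    rw [LinearMap.mem_ker, map_smul]
    refine Module.mem_annihilator.mp ((Ideal.map_le_iff_le_comap.mpr fun a ha => ?_ :
      I.map (algebraMap A B) ≤ Module.annihilator B (N ⊗[A] (M ⧸ (I • ⊤ : Submodule A M)))) hb) _
    rw [Ideal.mem_comap, Module.mem_annihilator]
    intro z
    rw [algebraMap_smul]
    induction z with
    | zero => simp
    | add z w hz hw => rw [smul_add, hz, hw, add_zero]
    | tmul n m =>
      obtain ⟨m, rfl⟩ := Submodule.mkQ_surjective _ m
      rw [← TensorProduct.tmul_smul, ← map_smul, Submodule.mkQ_apply,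
        (Submodule.Quotient.mk_eq_zero _).mpr (Submodule.smul_mem_smul ha Submodule.mem_top),
        TensorProduct.tmul_zero]

/-- The reduction of `N ⊗ M` modulo the extension of an ideal `I` of the base. -/
def quotientMapSMulTopEquiv (M : Type u) [AddCommGroup M] [Module A M] (I : Ideal A) :
    ((N ⊗[A] M) ⧸ (I.map (algebraMap A B) • ⊤ : Submodule B (N ⊗[A] M))) ≃ₗ[B]
      N ⊗[A] (M ⧸ (I • ⊤ : Submodule A M)) :=
  (Submodule.quotEquivOfEq _ _ (ker_lTensor_mkQ_smul_top M I).symm).trans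
    (LinearMap.quotKerEquivOfSurjective _
      (LinearMap.lTensor_surjective N (Submodule.mkQ_surjective _)))

/-- Let `k` be the residue field of a noetherian local ring `A` and `L` a finitely generated module
supported at the closed point. If `N` is flat over `A`, then every sequence that is weakly regular
on `N ⊗ k` is weakly regular on `N ⊗ L`, and the support of the latter is contained in that of the
former. -/
lemma isWeaklyRegular_and_support_subset_of_support_subset [IsLocalRing A] [IsNoetherianRing A]
    [Module.Flat A N] {ys : List B} (hys : IsWeaklyRegular (N ⊗[A] (A ⧸ maximalIdeal A)) ys)
    (L : Type u) [AddCommGroup L] [Module A L] [hL : Module.Finite A L]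
    (hsupp : Module.support A L ⊆ {closedPoint A}) :
    IsWeaklyRegular (N ⊗[A] L) ys ∧
      Module.support B (N ⊗[A] L) ⊆ Module.support B (N ⊗[A] (A ⧸ maximalIdeal A)) := by
  induction hL using IsNoetherianRing.induction_on_isQuotientEquivQuotientPrime A with
  | subsingleton L =>
    have : Subsingleton (N ⊗[A] L) := inferInstance
    exact ⟨⟨fun _ _ => Function.injective_of_subsingleton _⟩, by simp [Module.support_eq_empty]⟩
  | quotient L p e =>
    have hp : p = closedPoint A := hsupp (by
      rw [e.support_eq, Module.mem_support_iff_of_finite, Ideal.annihilator_quotient])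
    subst hp
    have e' := AlgebraTensorModule.congr (LinearEquiv.refl B N) e
    exact ⟨(e'.isWeaklyRegular_congr ys).mpr hys, e'.support_eq.subset⟩
  | exact L₁ L₂ L₃ f g hf hg hfg h₁ h₃ =>
    rw [Module.support_of_exact hfg hf hg, Set.union_subset_iff] at hsupp
    have hf' : Function.Injective (AlgebraTensorModule.lTensor B N f) :=
      Module.Flat.lTensor_preserves_injective_linearMap f hf
    have hg' : Function.Surjective (AlgebraTensorModule.lTensor B N g) :=
      LinearMap.lTensor_surjective N hg
    have hfg' : Function.Exact (AlgebraTensorModule.lTensor B N f)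
      (AlgebraTensorModule.lTensor B N g) := lTensor_exact N hfg hg
    refine ⟨.of_exact hf' hfg' hg' (h₁ hsupp.1).1 (h₃ hsupp.2).1, ?_⟩
    rw [Module.support_of_exact hfg' hf' hg']
    exact Set.union_subset (h₁ hsupp.1).2 (h₃ hsupp.2).2

theorem supportDim_tensorProduct_le_localDepth_add_one [IsLocalRing A] [IsNoetherianRing A]
    [IsLocalRing B] [IsNoetherianRing B] [IsLocalHom (algebraMap A B)] [Module.Finite B N]
    [Module.Flat A N] (M : Type u) [AddCommGroup M] [Module A M] [Module.Finite A M]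
    [Nontrivial (N ⊗[A] M)] (hM : (localDepth A M : WithBot ℕ∞) = supportDim A M)
    (hN : supportDim B (N ⊗[A] (A ⧸ maximalIdeal A)) ≤
      localDepth B (N ⊗[A] (A ⧸ maximalIdeal A)) + 1) :
    supportDim B (N ⊗[A] M) ≤ localDepth B (N ⊗[A] M) + 1 := by
  have : Nontrivial M := by
    by_contra h
    rw [not_nontrivial_iff_subsingleton] at h
    exact not_subsingleton (N ⊗[A] M) inferInstance
  have := Module.Finite.tensorProduct_left (A := A) (B := B) (N := N) M
  have := Module.Finite.tensorProduct_left (A := A) (B := B) (N := N) (A ⧸ maximalIdeal A)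
  obtain ⟨d, hd⟩ := ENat.ne_top_iff_exists.mp (localDepth_ne_top (R := A) M)
  obtain ⟨xs, rfl, hxs_mem, hxs⟩ := exists_isRegular_of_le_idealDepth hd.le
  let L := M ⧸ (Ideal.ofList xs • ⊤ : Submodule A M)
  have hL : Module.supportDim A L = 0 := by
    have h := Module.supportDim_add_length_eq_supportDim_of_isRegular xs hxs
    have := hxs.quot_ofList_smul_nontrivial ⊤
    obtain ⟨e, he⟩ := WithBot.ne_bot_iff_exists.mp (Module.supportDim_ne_bot_of_nontrivial A L)
    rw [show Module.supportDim A M = _ from hM.symm, ← hd, ← he] at h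
    have h : e + xs.length = 0 + (xs.length : ℕ∞) := by rw [zero_add]; exact_mod_cast h
    rw [← he, ENat.add_left_injective_of_ne_top (ENat.natCast_ne_top _) h]
    rfl
  have hsupp : Module.support A L ⊆ {closedPoint A} := by
    rw [support_of_supportDim_eq_zero A L hL]
    intro p hp
    exact PrimeSpectrum.ext ((maximalIdeal.isMaximal A).eq_of_le p.2.ne_top hp).symm
  let xs' := xs.map (algebraMap A B)
  have hxs'_mem : ∀ x ∈ xs', x ∈ maximalIdeal B := by
    intro x hx
    obtain ⟨a, ha, rfl⟩ := List.mem_map.mp hx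
    exact map_nonunit _ a (hxs_mem a ha)
  have hxs' : IsWeaklyRegular (N ⊗[A] M) xs' :=
    (isWeaklyRegular_map_algebraMap_iff B (N ⊗[A] M) xs).mpr hxs.1.isWeaklyRegular_lTensor
  have hxs'' := IsRegular.of_isWeaklyRegular_of_mem_maximalIdeal _ hxs'_mem hxs'
  let e : ((N ⊗[A] M) ⧸ (Ideal.ofList xs' • ⊤ : Submodule B (N ⊗[A] M))) ≃ₗ[B] N ⊗[A] L :=
    (Submodule.quotEquivOfEq _ _ (by rw [Ideal.map_ofList])).trans
      (quotientMapSMulTopEquiv M (Ideal.ofList xs))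
  have hdim := Module.supportDim_add_length_eq_supportDim_of_isRegular xs' hxs''
  rw [Module.supportDim_eq_of_equiv e, List.length_map] at hdim
  have hne : (Module.support B (N ⊗[A] L)).Nonempty := by
    have := hxs''.quot_ofList_smul_nontrivial ⊤
    rw [Module.nonempty_support_iff]
    exact e.symm.nontrivial
  have : Nontrivial (N ⊗[A] (A ⧸ maximalIdeal A)) := Module.nonempty_support_iff.mp
    (hne.mono (isWeaklyRegular_and_support_subset_of_support_subset (.nil B _) L hsupp).2)
  obtain ⟨n, hn⟩ := ENat.ne_top_iff_exists.mp
    (localDepth_ne_top (R := B) (N ⊗[A] (A ⧸ maximalIdeal A)))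
  obtain ⟨ys, rfl, hys_mem, hys⟩ := exists_isRegular_of_le_idealDepth hn.le
  obtain ⟨hys', hsub⟩ := isWeaklyRegular_and_support_subset_of_support_subset hys.1 L hsupp
  have hreg : IsWeaklyRegular (N ⊗[A] M) (xs' ++ ys) :=
    (isWeaklyRegular_append_iff _ _ _).mpr ⟨hxs', (e.isWeaklyRegular_congr ys).mpr hys'⟩
  have hmem : ∀ r ∈ xs' ++ ys, r ∈ maximalIdeal B := fun r hr =>
    (List.mem_append.mp hr).elim (hxs'_mem r) (hys_mem r)
  have hdepth : ((xs.length + ys.length : ℕ) : ℕ∞) ≤ localDepth B (N ⊗[A] M) := by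
    have h := length_le_idealDepth hmem (.of_isWeaklyRegular_of_mem_maximalIdeal _ hmem hreg)
    rwa [List.length_append, List.length_map] at h
  have hdim' : Module.supportDim B (N ⊗[A] L) ≤ ys.length + 1 := by
    rw [← hn] at hN
    exact (Order.krullDim_le_of_strictMono (Set.inclusion hsub) fun _ _ h => h).trans hN
  calc supportDim B (N ⊗[A] M) = Module.supportDim B (N ⊗[A] L) + xs.length := hdim.symm
    _ ≤ ys.length + 1 + xs.length := by gcongr
    _ = ((xs.length + ys.length : ℕ) : ℕ∞) + 1 := by push_cast; ring
    _ ≤ localDepth B (N ⊗[A] M) + 1 := add_le_add_left (WithBot.coe_le_coe.mpr hdepth) 1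

end LocalFlat

section Transport

variable {R : Type u} [CommRing R] {F G : Type u} [AddCommGroup F] [Module R F]
  [AddCommGroup G] [Module R G]

lemma LinearEquiv.idealDepth_eq (e : F ≃ₗ[R] G) (I : Ideal R) :
    idealDepth R I F = idealDepth R I G := by
  simp only [idealDepth, e.isRegular_congr]

lemma LinearEquiv.localDepth_eq [IsLocalRing R] (e : F ≃ₗ[R] G) :
    localDepth R F = localDepth R G :=
  e.idealDepth_eq _

lemma LinearEquiv.supportDim_eq (e : F ≃ₗ[R] G) : supportDim R F = supportDim R G :=
  Module.supportDim_eq_of_equiv e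

end Transport

section Surjective

variable {S T : Type u} [CommRing S] [CommRing T] [Algebra S T] (G : Type u) [AddCommGroup G]
  [Module S G] [Module T G] [IsScalarTower S T G]

lemma localDepth_le_localDepth_of_surjective [IsLocalRing S] [IsLocalRing T]
    (h : Function.Surjective (algebraMap S T)) : localDepth T G ≤ localDepth S G := by
  refine sSup_le ?_
  rintro _ ⟨rs, rfl, hmem, hreg⟩
  obtain ⟨g, hg⟩ := h.hasRightInverse
  rw [← List.length_map (f := g)]
  refine length_le_idealDepth (fun x hx => ?_)
    (((AddEquiv.refl G).isRegular_congr (List.forall₂_map_left_iff.mpr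
      (List.forall₂_same.mpr fun r _ x => ?_))).mpr hreg)
  · obtain ⟨r, hr, rfl⟩ := List.mem_map.mp hx
    rw [mem_maximalIdeal, mem_nonunits_iff]
    intro hu
    refine (mem_maximalIdeal r).mp (hmem r hr) ?_
    rw [← hg r]
    exact hu.map _
  · change g r • x = r • x
    rw [← algebraMap_smul T (g r) x, hg r]

lemma supportDim_le_supportDim_of_surjective (h : Function.Surjective (algebraMap S T)) :
    supportDim S G ≤ supportDim T G := by
  have key : ∀ q : Module.support S G, ∃ q' : Module.support T G,
      q'.1.asIdeal.comap (algebraMap S T) = q.1.asIdeal := by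
    rintro ⟨q, hq⟩
    rw [Module.mem_support_iff'] at hq
    obtain ⟨m, hm⟩ := hq
    have hker : RingHom.ker (algebraMap S T) ≤ q.asIdeal := by
      intro s hs
      by_contra hsq
      refine hm s hsq ?_
      rw [← algebraMap_smul T s m, (RingHom.mem_ker).mp hs, zero_smul]
    have hcomap : (q.asIdeal.map (algebraMap S T)).comap (algebraMap S T) = q.asIdeal := by
      rw [Ideal.comap_map_of_surjective' _ h, sup_eq_left.mpr hker]
    refine ⟨⟨⟨q.asIdeal.map (algebraMap S T), Ideal.map_isPrime_of_surjective h hker⟩, ?_⟩, hcomap⟩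
    rw [Module.mem_support_iff']
    refine ⟨m, fun r hr => ?_⟩
    obtain ⟨s, rfl⟩ := h r
    rw [algebraMap_smul]
    exact hm s fun hs => hr (Ideal.mem_map_of_mem _ hs)
  choose f hf using key
  refine Order.krullDim_le_of_strictMono f fun q₁ q₂ hlt => ?_
  have hle : ∀ {q₁ q₂}, f q₁ ≤ f q₂ ↔ q₁ ≤ q₂ := by
    intro q₁ q₂
    change (f q₁).1.asIdeal ≤ (f q₂).1.asIdeal ↔ q₁.1.asIdeal ≤ q₂.1.asIdeal
    rw [← hf q₁, ← hf q₂, Ideal.comap_le_comap_iff_of_surjective _ h]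
  rw [lt_iff_le_not_ge, hle, hle, ← lt_iff_le_not_ge]
  exact hlt

end Surjective

section Fiber

attribute [local instance] tensorLeftModule tensorModule

variable {B : Type u} [CommRing B]

/-- The localization of `S⁻¹N / J S⁻¹N` at a prime, as a base change of `N`. -/
def localizedModuleQuotientEquiv (S : Submonoid B) (I : Ideal (Localization S))
    (N : Type u) [AddCommGroup N] [Module B N] (p : Ideal (Localization S ⧸ I)) [p.IsPrime] :
    LocalizedModule p.primeCompl
      (LocalizedModule S N ⧸ (I • ⊤ : Submodule (Localization S) (LocalizedModule S N)))
      ≃ₗ[Localization.AtPrime p] Localization.AtPrime p ⊗[B] N :=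
  let X := LocalizedModule S N ⧸ (I • ⊤ : Submodule (Localization S) (LocalizedModule S N))
  let e₀ : LocalizedModule p.primeCompl X ≃ₗ[Localization.AtPrime p]
      Localization.AtPrime p ⊗[Localization S ⧸ I] X :=
    LocalizedModule.equivTensorProduct p.primeCompl X
  let e₁ : X ≃ₗ[Localization S ⧸ I] (Localization S ⧸ I) ⊗[Localization S] LocalizedModule S N :=
    (quotTensorEquivQuotSMul (LocalizedModule S N) I).symm.extendScalarsOfSurjective
      Ideal.Quotient.mk_surjective
  let e₂ : (Localization S ⧸ I) ⊗[Localization S] LocalizedModule S N ≃ₗ[Localization S ⧸ I]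
      (Localization S ⧸ I) ⊗[B] N :=
    (AlgebraTensorModule.congr (.refl _ _) (LocalizedModule.equivTensorProduct S N)).trans
      (AlgebraTensorModule.cancelBaseChange B (Localization S) (Localization S ⧸ I) _ N)
  e₀.trans ((AlgebraTensorModule.congr (.refl _ _) (e₁.trans e₂)).trans
    (AlgebraTensorModule.cancelBaseChange B (Localization S ⧸ I) (Localization.AtPrime p) _ N))

end Fiber

section Fiber

attribute [local instance] tensorLeftModule tensorModule

variable {B : Type u} [CommRing B]

/-- Localizing `S⁻¹B / J S⁻¹B` at the prime corresponding to `Q` gives `B_Q / J B_Q`. -/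
lemma exists_isPrime_algebra_atPrime (S : Submonoid B) (J Q : Ideal B) [Q.IsPrime]
    (hS : S ≤ Q.primeCompl) (hJ : J ≤ Q) :
    ∃ (p : Ideal (Localization S ⧸ J.map (algebraMap B (Localization S)))) (_ : p.IsPrime)
      (_ : Algebra (Localization.AtPrime Q) (Localization.AtPrime p)),
        IsScalarTower B (Localization.AtPrime Q) (Localization.AtPrime p) ∧
        Function.Surjective (algebraMap (Localization.AtPrime Q) (Localization.AtPrime p)) ∧
        RingHom.ker (algebraMap (Localization.AtPrime Q) (Localization.AtPrime p)) =
          J.map (algebraMap B (Localization.AtPrime Q)) := by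
  let I := J.map (algebraMap B (Localization S))
  let JQ := J.map (algebraMap B (Localization.AtPrime Q))
  let K := Localization.AtPrime Q ⧸ JQ
  have hJQ : JQ ≤ maximalIdeal (Localization.AtPrime Q) := by
    rw [← Localization.AtPrime.map_eq_maximalIdeal]
    exact Ideal.map_mono hJ
  have : Nontrivial K := Ideal.Quotient.nontrivial_iff.mpr
    (ne_top_of_le_ne_top (maximalIdeal.isMaximal _).ne_top hJQ)
  have : IsLocalRing K := .of_surjective' (Ideal.Quotient.mk JQ) Ideal.Quotient.mk_surjective
  let ψ₀ : Localization S →+* K := IsLocalization.lift (M := S) (g := algebraMap B K) fun s => by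
    rw [IsScalarTower.algebraMap_apply B (Localization.AtPrime Q) K]
    exact (IsLocalization.map_units (Localization.AtPrime Q) (⟨s, hS s.2⟩ : Q.primeCompl)).map _
  let ψ : Localization S ⧸ I →+* K := Ideal.Quotient.lift I ψ₀ (by
    change I ≤ RingHom.ker ψ₀
    rw [Ideal.map_le_iff_le_comap]
    intro b hb
    rw [Ideal.mem_comap, RingHom.mem_ker, IsLocalization.lift_eq,
      IsScalarTower.algebraMap_apply B (Localization.AtPrime Q) K]
    exact Ideal.Quotient.eq_zero_iff_mem.mpr (Ideal.mem_map_of_mem _ hb))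
  have hψ : ψ.comp (algebraMap B (Localization S ⧸ I)) = algebraMap B K :=
    RingHom.ext fun b => IsLocalization.lift_eq _ b
  let p := (maximalIdeal K).comap ψ
  have hp : p.IsPrime := inferInstance
  have hcomap : Q = p.comap (algebraMap B (Localization S ⧸ I)) := by
    rw [Ideal.comap_comap, hψ, IsScalarTower.algebraMap_eq B (Localization.AtPrime Q) K,
      ← Ideal.comap_comap]
    have : IsLocalHom (algebraMap (Localization.AtPrime Q) K) :=
      .of_surjective _ Ideal.Quotient.mk_surjective
    have h : (maximalIdeal K).comap (algebraMap (Localization.AtPrime Q) K) = maximalIdeal _ :=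
      ((local_hom_TFAE _).out 0 4).mp this
    rw [h]
    exact (Localization.AtPrime.under_maximalIdeal).symm
  let φ := Localization.localRingHom Q p (algebraMap B (Localization S ⧸ I)) hcomap
  have hφ : ∀ b, φ (algebraMap B _ b) = algebraMap B (Localization.AtPrime p) b :=
    Localization.localRingHom_to_map Q p _ hcomap
  refine ⟨p, hp, φ.toAlgebra, @IsScalarTower.of_algebraMap_eq _ _ _ _ _ _ _ φ.toAlgebra _
    fun b => (hφ b).symm, ?_, le_antisymm ?_ ?_⟩
  · refine RingHom.SurjectiveOnStalks.localRingHom_surjective ?_ Q p hcomap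
    rw [IsScalarTower.algebraMap_eq B (Localization S)]
    exact (RingHom.surjectiveOnStalks_of_surjective Ideal.Quotient.mk_surjective).comp
      (RingHom.surjectiveOnStalks_of_isLocalization (M := S) (Localization S))
  · let χ : Localization.AtPrime p →+* K :=
      IsLocalization.lift (M := p.primeCompl) (g := ψ) fun y => by
        by_contra h
        exact y.2 ((mem_maximalIdeal _).mpr h)
    have hχ : χ.comp φ = algebraMap (Localization.AtPrime Q) K := by
      refine IsLocalization.ringHom_ext Q.primeCompl (RingHom.ext fun b => ?_)
      simp only [RingHom.comp_apply, hφ]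
      rw [IsScalarTower.algebraMap_apply B (Localization S ⧸ I), IsLocalization.lift_eq,
        ← RingHom.comp_apply, hψ, IsScalarTower.algebraMap_apply B (Localization.AtPrime Q) K]
    intro x hx
    have hx : φ x = 0 := hx
    have := RingHom.congr_fun hχ x
    rw [RingHom.comp_apply, hx, map_zero] at this
    exact Ideal.Quotient.eq_zero_iff_mem.mp this.symm
  · rw [Ideal.map_le_iff_le_comap]
    intro b hb
    change φ (algebraMap B _ b) = 0
    rw [hφ, IsScalarTower.algebraMap_apply B (Localization S ⧸ I),
      IsScalarTower.algebraMap_apply B (Localization S) (Localization S ⧸ I)]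
    have : algebraMap (Localization S) (Localization S ⧸ I) (algebraMap B _ b) = 0 :=
      Ideal.Quotient.eq_zero_iff_mem.mpr (Ideal.mem_map_of_mem _ hb)
    rw [this, map_zero]

/-- Reduction modulo the kernel of a surjection, as a base change. -/
def quotSMulTopEquivOfSurjective {R T : Type u} [CommRing R] [CommRing T] [Algebra R T]
    (h : Function.Surjective (algebraMap R T)) {J : Ideal R} (hJ : RingHom.ker (algebraMap R T) = J)
    (X : Type u) [AddCommGroup X] [Module R X] :
    (X ⧸ (J • ⊤ : Submodule R X)) ≃ₗ[R] T ⊗[R] X :=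
  (quotTensorEquivQuotSMul X J).symm.trans (TensorProduct.congr
    ((Submodule.quotEquivOfEq _ _ hJ.symm).trans
      (LinearMap.quotKerEquivOfSurjective (Algebra.linearMap R T) h)) (.refl R X))

lemma IsAlmostCMModule.supportDim_le_of_surjective {R S : Type u} [CommRing R] [IsNoetherianRing R]
    [CommRing S] [IsLocalRing S] {X : Type u} [AddCommGroup X] [Module R X] [Module.Finite R X]
    (h : IsAlmostCMModule R X) (p : PrimeSpectrum R) [Algebra S (Localization.AtPrime p.asIdeal)]
    (hS : Function.Surjective (algebraMap S (Localization.AtPrime p.asIdeal)))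
    (G : Type u) [AddCommGroup G] [Module S G] [Module (Localization.AtPrime p.asIdeal) G]
    [IsScalarTower S (Localization.AtPrime p.asIdeal) G]
    (e : LocalizedModule p.asIdeal.primeCompl X ≃ₗ[Localization.AtPrime p.asIdeal] G) :
    supportDim S G ≤ localDepth S G + 1 := by
  cases subsingleton_or_nontrivial G with
  | inl hG => exact (Module.supportDim_eq_bot_of_subsingleton S G).trans_le bot_le
  | inr hG =>
    have hp : p ∈ Module.support R X := e.nontrivial
    calc supportDim S G ≤ supportDim (Localization.AtPrime p.asIdeal) G :=
        supportDim_le_supportDim_of_surjective G hS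
      _ = heightAt R X p := e.symm.supportDim_eq
      _ ≤ depthAt R X p + 1 := h.heightAt_le hp
      _ = localDepth (Localization.AtPrime p.asIdeal) G + 1 := by rw [← e.localDepth_eq]; rfl
      _ ≤ localDepth S G + 1 :=
        add_le_add_left (WithBot.coe_le_coe.mpr (localDepth_le_localDepth_of_surjective G hS)) 1

lemma IsAlmostCMModule.supportDim_quotient_le {R B' : Type u} [CommRing R] [IsNoetherianRing R]
    [Algebra B R] [CommRing B'] [IsLocalRing B'] [Algebra B B']
    {X : Type u} [AddCommGroup X] [Module R X] [Module.Finite R X] (h : IsAlmostCMModule R X)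
    (p : Ideal R) [p.IsPrime] [Algebra B' (Localization.AtPrime p)]
    [IsScalarTower B B' (Localization.AtPrime p)]
    (hsurj : Function.Surjective (algebraMap B' (Localization.AtPrime p))) {J : Ideal B'}
    (hker : RingHom.ker (algebraMap B' (Localization.AtPrime p)) = J)
    (N : Type u) [AddCommGroup N] [Module B N]
    (e : LocalizedModule p.primeCompl X ≃ₗ[Localization.AtPrime p] Localization.AtPrime p ⊗[B] N) :
    supportDim B' ((B' ⊗[B] N) ⧸ (J • ⊤ : Submodule B' (B' ⊗[B] N))) ≤
      localDepth B' ((B' ⊗[B] N) ⧸ (J • ⊤ : Submodule B' (B' ⊗[B] N))) + 1 := by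
  let e' := quotSMulTopEquivOfSurjective hsurj hker (B' ⊗[B] N)
  rw [e'.supportDim_eq, e'.localDepth_eq]
  exact h.supportDim_le_of_surjective ⟨p, inferInstance⟩ hsurj _
    (e.trans (AlgebraTensorModule.cancelBaseChange B B' (Localization.AtPrime p)
        (Localization.AtPrime p) N).symm)

lemma supportDim_quotient_le_of_isAlmostCMModule [IsNoetherianRing B] (S : Submonoid B)
    (J Q : Ideal B) [Q.IsPrime] (hS : S ≤ Q.primeCompl) (hJ : J ≤ Q)
    (N : Type u) [AddCommGroup N] [Module B N] [Module.Finite B N]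
    (h : IsAlmostCMModule (Localization S ⧸ J.map (algebraMap B (Localization S)))
      (LocalizedModule S N ⧸ (J.map (algebraMap B (Localization S)) • ⊤ :
        Submodule (Localization S) (LocalizedModule S N)))) :
    supportDim (Localization.AtPrime Q) ((Localization.AtPrime Q ⊗[B] N) ⧸
        (J.map (algebraMap B (Localization.AtPrime Q)) • ⊤ :
          Submodule (Localization.AtPrime Q) (Localization.AtPrime Q ⊗[B] N))) ≤
      localDepth (Localization.AtPrime Q) ((Localization.AtPrime Q ⊗[B] N) ⧸
        (J.map (algebraMap B (Localization.AtPrime Q)) • ⊤ :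
          Submodule (Localization.AtPrime Q) (Localization.AtPrime Q ⊗[B] N))) + 1 := by
  obtain ⟨p, hp, _, _, hsurj, hker⟩ := exists_isPrime_algebra_atPrime S J Q hS hJ
  have : Module.Finite (Localization S ⧸ J.map (algebraMap B (Localization S)))
      (LocalizedModule S N ⧸ (J.map (algebraMap B (Localization S)) • ⊤ :
        Submodule (Localization S) (LocalizedModule S N))) :=
    .of_restrictScalars_finite (Localization S) _ _
  exact h.supportDim_quotient_le p hsurj hker N (localizedModuleQuotientEquiv S _ N p)

end Fiber

section LocalizedTensor

attribute [local instance] tensorLeftModule tensorModule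

variable {A B : Type u} [CommRing A] [CommRing B] [Algebra A B]
  {N : Type u} [AddCommGroup N] [Module A N] [Module B N] [IsScalarTower A B N]

lemma heightAt_eq_supportDim_tensorProduct (P : PrimeSpectrum A)
    (M : Type u) [AddCommGroup M] [Module A M] :
    heightAt A M P = supportDim (Localization.AtPrime P.asIdeal)
      (Localization.AtPrime P.asIdeal ⊗[A] M) :=
  LinearEquiv.supportDim_eq (LocalizedModule.equivTensorProduct P.asIdeal.primeCompl M)

lemma depthAt_eq_localDepth_tensorProduct (P : PrimeSpectrum A)
    (M : Type u) [AddCommGroup M] [Module A M] :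
    depthAt A M P = localDepth (Localization.AtPrime P.asIdeal)
      (Localization.AtPrime P.asIdeal ⊗[A] M) :=
  LinearEquiv.localDepth_eq (LocalizedModule.equivTensorProduct P.asIdeal.primeCompl M)

/-- Base change along a surjection `A → A / I`, with the action of an `A`-algebra `B` on `N`. -/
def tensorQuotientEquivQuotientMapSMulTop (I : Ideal A) :
    (N ⊗[A] (A ⧸ I)) ≃ₗ[B] N ⧸ (I.map (algebraMap A B) • ⊤ : Submodule B N) :=
  (AlgebraTensorModule.congr (.refl B N) (Submodule.quotEquivOfEq I (I • ⊤)
    (Ideal.mul_top I).symm)).trans ((quotientMapSMulTopEquiv A I).symm.trans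
      (Submodule.Quotient.equiv _ _ (AlgebraTensorModule.rid A B N) (by
        rw [Submodule.map_smul'', Submodule.map_top, LinearEquiv.range])))

variable {A' B' : Type u} [CommRing A'] [CommRing B'] [Algebra A A'] [Algebra B B'] [Algebra A' B']
  [Algebra A B'] [IsScalarTower A B B'] [IsScalarTower A A' B']

lemma Module.Flat.tensorProduct_of_tower [Module.Flat B B'] [Module.Flat A N] :
    Module.Flat A (B' ⊗[B] N) := by
  rw [Module.Flat.iff_lTensor_preserves_injective_linearMap]
  intro X Y _ _ _ _ f hf
  have hf' : Function.Injective (AlgebraTensorModule.lTensor B N f) :=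
    Module.Flat.lTensor_preserves_injective_linearMap f hf
  have hf'' := Module.Flat.lTensor_preserves_injective_linearMap (M := B') _ hf'
  have : ⇑(AlgebraTensorModule.assoc A B B' B' N Y) ∘ (LinearMap.lTensor (B' ⊗[B] N) f) =
      LinearMap.lTensor B' (AlgebraTensorModule.lTensor B N f) ∘
        AlgebraTensorModule.assoc A B B' B' N X := by
    funext z
    simp only [Function.comp_apply]
    induction z with
    | zero => simp
    | add z w hz hw => simp only [map_add, hz, hw]
    | tmul n x =>
      induction n with
      | zero => simp
      | add n n' hn hn' => simp only [TensorProduct.add_tmul, map_add, hn, hn']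
      | tmul b n => rfl
  refine Function.Injective.of_comp (f := AlgebraTensorModule.assoc A B B' B' N Y) ?_
  rw [this]
  exact hf''.comp (LinearEquiv.injective _)

/-- Base change of a tensor product along a commutative square of rings. -/
def baseChangeTensorEquiv (M : Type u) [AddCommGroup M] [Module A M] :
    (B' ⊗[B] (N ⊗[A] M)) ≃ₗ[B'] ((B' ⊗[B] N) ⊗[A'] (A' ⊗[A] M)) :=
  (AlgebraTensorModule.assoc A B B' B' N M).symm.trans
    (AlgebraTensorModule.cancelBaseChange A A' B' (B' ⊗[B] N) M).symm

lemma supportDim_baseChange_tensorProduct_le [IsLocalRing A'] [IsNoetherianRing A']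
    [IsLocalRing B'] [IsNoetherianRing B'] [IsLocalHom (algebraMap A' B')]
    [Module.Flat A' (B' ⊗[B] N)] [Module.Finite B N]
    (M : Type u) [AddCommGroup M] [Module A M] [Module.Finite A M]
    (hM : Nontrivial (A' ⊗[A] M) →
      (localDepth A' (A' ⊗[A] M) : WithBot ℕ∞) = supportDim A' (A' ⊗[A] M))
    (hN : Nontrivial (A' ⊗[A] M) →
      supportDim B' ((B' ⊗[B] N) ⧸
          ((maximalIdeal A').map (algebraMap A' B') • ⊤ : Submodule B' (B' ⊗[B] N))) ≤
        localDepth B' ((B' ⊗[B] N) ⧸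
          ((maximalIdeal A').map (algebraMap A' B') • ⊤ : Submodule B' (B' ⊗[B] N))) + 1) :
    supportDim B' (B' ⊗[B] (N ⊗[A] M)) ≤ localDepth B' (B' ⊗[B] (N ⊗[A] M)) + 1 := by
  have e : (B' ⊗[B] (N ⊗[A] M)) ≃ₗ[B'] ((B' ⊗[B] N) ⊗[A'] (A' ⊗[A] M)) :=
    baseChangeTensorEquiv M
  rw [LinearEquiv.supportDim_eq (G := (B' ⊗[B] N) ⊗[A'] (A' ⊗[A] M)) e,
    LinearEquiv.localDepth_eq (G := (B' ⊗[B] N) ⊗[A'] (A' ⊗[A] M)) e]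
  cases subsingleton_or_nontrivial ((B' ⊗[B] N) ⊗[A'] (A' ⊗[A] M)) with
  | inl h => exact (Module.supportDim_eq_bot_of_subsingleton B' _).trans_le bot_le
  | inr h =>
    have hnt : Nontrivial (A' ⊗[A] M) := by
      by_contra hs
      rw [not_nontrivial_iff_subsingleton] at hs
      exact not_subsingleton ((B' ⊗[B] N) ⊗[A'] (A' ⊗[A] M)) inferInstance
    refine supportDim_tensorProduct_le_localDepth_add_one (A' ⊗[A] M) (hM hnt) ?_
    have e' := tensorQuotientEquivQuotientMapSMulTop (B := B') (N := B' ⊗[B] N) (maximalIdeal A')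
    rw [e'.supportDim_eq, e'.localDepth_eq]
    exact hN hnt

theorem heightAt_tensorProduct_le [IsNoetherianRing A] [IsNoetherianRing B]
    (M : Type u) [AddCommGroup M] [Module A M] [Module.Finite A M]
    [Module.Finite B N] [Module.Flat A N] (hM : IsCMModule A M)
    (hfib : ∀ P ∈ Module.support A M, IsAlmostCMModule (fiberRing A B P) (fiberModule A B P N))
    (Q : PrimeSpectrum B) :
    heightAt B (N ⊗[A] M) Q ≤ depthAt B (N ⊗[A] M) Q + 1 := by
  let P : PrimeSpectrum A := Q.comap (algebraMap A B)
  let A' := Localization.AtPrime P.asIdeal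
  let B' := Localization.AtPrime Q.asIdeal
  have : Q.asIdeal.LiesOver P.asIdeal := ⟨rfl⟩
  let _ : Algebra A' B' := Localization.AtPrime.algebraOfLiesOver P.asIdeal Q.asIdeal
  have : IsLocalHom (algebraMap A' B') :=
    Localization.isLocalHom_localRingHom P.asIdeal Q.asIdeal (algebraMap A B) rfl
  have : Module.Flat A' (B' ⊗[B] N) :=
    (Module.flat_iff_of_isLocalization A' P.asIdeal.primeCompl _).mpr
      Module.Flat.tensorProduct_of_tower
  have hP (h : Nontrivial (A' ⊗[A] M)) : P ∈ Module.support A M :=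
    (LocalizedModule.equivTensorProduct P.asIdeal.primeCompl M).nontrivial
  rw [heightAt_eq_supportDim_tensorProduct, depthAt_eq_localDepth_tensorProduct]
  refine supportDim_baseChange_tensorProduct_le (A' := A') M (fun hnt => ?_) fun hnt => ?_
  · rw [← heightAt_eq_supportDim_tensorProduct, ← depthAt_eq_localDepth_tensorProduct]
    exact hM P (hP hnt)
  · have hmax : (maximalIdeal A').map (algebraMap A' B') =
        (P.asIdeal.map (algebraMap A B)).map (algebraMap B B') := by
      rw [← Localization.AtPrime.map_eq_maximalIdeal, Ideal.map_map, Ideal.map_map,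
        ← IsScalarTower.algebraMap_eq, ← IsScalarTower.algebraMap_eq]
    have hI : fiberIdeal A B P = (P.asIdeal.map (algebraMap A B)).map
        (algebraMap B (Localization (fiberSubmonoid A B P))) := (Ideal.map_map _ _).symm
    have h : IsAlmostCMModule (Localization (fiberSubmonoid A B P) ⧸ fiberIdeal A B P)
      (LocalizedModule (fiberSubmonoid A B P) N ⧸ (fiberIdeal A B P • ⊤ : Submodule
        (Localization (fiberSubmonoid A B P)) (LocalizedModule (fiberSubmonoid A B P) N))) :=
      hfib P (hP hnt)
    rw [hI] at h
    rw [hmax]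
    refine supportDim_quotient_le_of_isAlmostCMModule (fiberSubmonoid A B P) _ Q.asIdeal ?_ ?_ N h
    · rintro _ ⟨a, ha, rfl⟩
      exact ha
    · exact Ideal.map_comap_le

end LocalizedTensor

/-- The swap of tensor factors, linear for the action through the factor `N`. -/
def tensorRightModuleEquiv (A B : Type u) [CommRing A] [CommRing B] [Algebra A B]
    (M : Type u) [AddCommGroup M] [Module A M]
    (N : Type u) [AddCommGroup N] [Module A N] [Module B N] [IsScalarTower A B N] :
    M ⊗[A] N ≃ₗ[B] N ⊗[A] M :=
  { TensorProduct.comm A M N with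
    map_smul' := fun b x => (TensorProduct.comm A M N).apply_symm_apply
      (b • TensorProduct.comm A M N x) }

lemma LinearEquiv.isAlmostCMModule {R F G : Type u} [CommRing R] [AddCommGroup F] [Module R F]
    [AddCommGroup G] [Module R G] (e : F ≃ₗ[R] G) (h : IsAlmostCMModule R F) :
    IsAlmostCMModule R G := by
  intro P hP
  rw [← e.support_eq] at hP
  rw [← e.idealDepth_eq, h P hP]
  exact (IsLocalizedModule.mapEquiv P.asIdeal.primeCompl
    (LocalizedModule.mkLinearMap P.asIdeal.primeCompl F)
    (LocalizedModule.mkLinearMap P.asIdeal.primeCompl G)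
    (Localization.AtPrime P.asIdeal) e).localDepth_eq

end Lemmas

theorem tensor_almostCM_of_CM_base_almostCM_fibers (A B : Type u) [CommRing A] [CommRing B] [IsNoetherianRing A] [IsNoetherianRing B]
    [Algebra A B]
    (M : Type u) [AddCommGroup M] [Module A M] [Module.Finite A M]
    (N : Type u) [AddCommGroup N] [Module A N] [Module B N] [IsScalarTower A B N]
    [Module.Finite B N] [Module.Flat A N]
    (hM : IsCMModule A M)
    (hfib : ∀ P ∈ Module.support A M, IsAlmostCMModule (fiberRing A B P) (fiberModule A B P N)) :
    IsAlmostCMModule B (M ⊗[A] N) := by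
  have := Module.Finite.tensorProduct_left (A := A) (B := B) (N := N) M
  exact (tensorRightModuleEquiv A B M N).symm.isAlmostCMModule
    (isAlmostCMModule_of_heightAt_le fun Q _ => heightAt_tensorProduct_le M hM hfib Q)

end
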